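/- Let δ > 0, p ≥ 2, fix a model M₀ ∈ 𝓜, and set U_M = 4 σ² (δ+1) ν_r^{-2} ‖Ψ_M‖_F² ln p. For θ in the simplex Θ_𝓜 = {θ : θ_M ≥ 0 for all M ∈ 𝓜, Σ_{M∈𝓜} θ_M = 1}, define f̂_θ = Σ_{M∈𝓜} θ_M f̂_M and Δ₀(θ) = 2σ⟨ξ, f̂_θ − f̂_{M₀}⟩ + (σ²/ν_r²) ‖Ψ_{M₀}ᵀ ε‖² − (3/2) U_{M₀} − Σ_{M∈𝓜} θ_M U_M − (1/2) Σ_{M∈𝓜} θ_M ‖f̂_M − f̂_{M₀}‖². Then with probability at least 1 − √(2/π) p^{−δ}, Δ₀(θ) ≤ 0 holds simultaneously for all θ ∈ Θ_𝓜. -/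

import Mathlib

open MeasureTheory ProbabilityTheory Matrix Finset

noncomputable section

/-- Squared Euclidean norm of a vector in `ℝ^k`. -/
def sqnorm {k : ℕ} (v : Fin k → ℝ) : ℝ := ∑ i, v i ^ 2

/-- Euclidean inner product on `ℝ^k`. -/
def ip {k : ℕ} (u v : Fin k → ℝ) : ℝ := ∑ i, u i * v i

/-- The `j`-th column of a matrix. -/
def colv {a b : ℕ} (B : Matrix (Fin a) (Fin b) ℝ) (j : Fin b) : Fin a → ℝ := fun i => B i j

/-- The matrix `B_M`: the columns of `B` outside `M` are replaced by zero. -/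
def restr {a b : ℕ} (B : Matrix (Fin a) (Fin b) ℝ) (M : Finset (Fin b)) :
    Matrix (Fin a) (Fin b) ℝ := fun i j => if j ∈ M then B i j else 0

/-- Squared Frobenius norm of a matrix. -/
def frob2 {a b : ℕ} (B : Matrix (Fin a) (Fin b) ℝ) : ℝ := ∑ j, sqnorm (colv B j)

/-- `x` has at most `r` nonzero coordinates. -/
def sparse {k : ℕ} (r : ℕ) (x : Fin k → ℝ) : Prop := (Function.support x).ncard ≤ r

/-- `H` is the orthogonal projection matrix of `ℝ^m` onto `span{φ_j : j ∈ M}`: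
symmetric, idempotent, with range equal to the span of the columns of `Φ` indexed by `M`. -/
def IsProjOnto {m p : ℕ} (Φ : Matrix (Fin m) (Fin p) ℝ) (M : Finset (Fin p))
    (H : Matrix (Fin m) (Fin m) ℝ) : Prop :=
  H.IsSymm ∧ H * H = H ∧
    LinearMap.range H.mulVecLin = Submodule.span ℝ (colv Φ '' (M : Set (Fin p)))

/-- `Ψ = A (AᵀA)⁻¹ Φ`. -/
def Psi {n m p : ℕ} (A : Matrix (Fin n) (Fin m) ℝ) (Φ : Matrix (Fin m) (Fin p) ℝ) :
    Matrix (Fin n) (Fin p) ℝ := A * (Aᵀ * A)⁻¹ * Φ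

/-- `z = (AᵀA)⁻¹ Aᵀ y` where `y = A f + σ e`. -/
def zv {n m : ℕ} (A : Matrix (Fin n) (Fin m) ℝ) (f : Fin m → ℝ) (σ : ℝ) (e : Fin n → ℝ) :
    Fin m → ℝ := ((Aᵀ * A)⁻¹ * Aᵀ).mulVec (A.mulVec f + σ • e)

/-- `ξ = (AᵀA)⁻¹ Aᵀ e`. -/
def xiv {n m : ℕ} (A : Matrix (Fin n) (Fin m) ℝ) (e : Fin n → ℝ) : Fin m → ℝ :=
  ((Aᵀ * A)⁻¹ * Aᵀ).mulVec e

/-- The collection `𝓜` of models of size at most `r/2`. -/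
def models (p r : ℕ) : Finset (Finset (Fin p)) := Finset.univ.filter fun M => 2 * M.card ≤ r

open scoped Classical in
/-- The restricted collection `𝓜_γ = {M ∈ 𝓜 : ‖Ψ_M‖_F² ≤ γ²n}`. -/
def modelsG {n m p : ℕ} (r : ℕ) (A : Matrix (Fin n) (Fin m) ℝ) (Φ : Matrix (Fin m) (Fin p) ℝ)
    (γ : ℝ) : Finset (Finset (Fin p)) :=
  Finset.univ.filter fun M => 2 * M.card ≤ r ∧ frob2 (restr (Psi A Φ) M) ≤ γ ^ 2 * (n : ℝ)

/-- The aggregated estimator `f̂_θ = ∑_{M ∈ C} θ_M f̂_M`, where `f̂_M = H_M z`. -/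
def aggEst {m p : ℕ} (C : Finset (Finset (Fin p)))
    (H : Finset (Fin p) → Matrix (Fin m) (Fin m) ℝ) (zvec : Fin m → ℝ)
    (θ : Finset (Fin p) → ℝ) : Fin m → ℝ :=
  ∑ M ∈ C, θ M • (H M).mulVec zvec

/-- The penalty `U_M = 4σ²(δ+1)ν_r⁻² ‖Ψ_M‖_F² ln p`. -/
def Ufun {n m p : ℕ} (A : Matrix (Fin n) (Fin m) ℝ) (Φ : Matrix (Fin m) (Fin p) ℝ)
    (σ δ ν2 : ℝ) (M : Finset (Fin p)) : ℝ :=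
  4 * σ ^ 2 * (δ + 1) / ν2 * frob2 (restr (Psi A Φ) M) * Real.log p

/-- The Q-aggregation criterion (with `α = 1/2`, multiplied by 2):
`∑_M θ_M (‖z - f̂_M‖² + 2U_M) + ‖z - f̂_θ‖²`. -/
def aggCrit {m p : ℕ} (C : Finset (Finset (Fin p)))
    (H : Finset (Fin p) → Matrix (Fin m) (Fin m) ℝ) (zvec : Fin m → ℝ)
    (U : Finset (Fin p) → ℝ) (θ : Finset (Fin p) → ℝ) : ℝ :=
  ∑ M ∈ C, θ M * (sqnorm (zvec - (H M).mulVec zvec) + 2 * U M) +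
    sqnorm (zvec - aggEst C H zvec θ)

/-!
Each `⟨ψ_j, ε⟩` is centred Gaussian with variance `‖ψ_j‖²`, so by Mills' inequality and a union
bound all `p` inequalities `⟨ψ_j, ε⟩² ≤ 2(δ+1) ln p ‖ψ_j‖²` hold with probability at least
`1 - √(2/π) p^{-δ}`. The rest is deterministic on this event, where
`2σ²ν_r⁻² ‖Ψ_Mᵀ ε‖² ≤ U_M` for every `M`. The difference `f̂_M - f̂_{M₀}` equals `Φ x` with `x`
supported on `M ∪ M₀`, hence `r`-sparse, and `⟨ξ, Φ x⟩ = ⟨Ψᵀ ε, x⟩`. Young's inequality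
with weight `ν_r²` therefore gives
`2σ⟨ξ, f̂_M - f̂_{M₀}⟩ ≤ ½‖f̂_M - f̂_{M₀}‖² + 2σ²ν_r⁻²(‖Ψ_Mᵀ ε‖² + ‖Ψ_{M₀}ᵀ ε‖²)`,
and averaging over `θ` finishes the proof.
-/

section GaussianTails

variable {ι κ Ω : Type*} [Fintype ι] [Fintype κ] [MeasurableSpace Ω]

lemma hasDerivAt_gaussianPDFReal (m : ℝ) (v : NNReal) (x : ℝ) :
    HasDerivAt (gaussianPDFReal m v) (-((x - m) / v) * gaussianPDFReal m v x) x := by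
  have hexponent : HasDerivAt (fun y : ℝ => -(y - m) ^ 2 / (2 * v)) (-((x - m) / v)) x := by
    convert! (((hasDerivAt_id x).sub_const m).pow 2).neg.div_const (2 * (v : ℝ)) using 1
    simp only [id_eq, Nat.cast_ofNat, Nat.add_one_sub_one, pow_one, mul_one, neg_div,
      mul_div_mul_left _ _ (two_ne_zero' ℝ)]
  convert! hexponent.exp.const_mul (Real.sqrt (2 * Real.pi * v))⁻¹ using 1
  rw [gaussianPDFReal]
  ring

lemma tendsto_gaussianPDFReal_atTop (m : ℝ) (v : NNReal) :
    Filter.Tendsto (gaussianPDFReal m v) Filter.atTop (nhds 0) := by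
  rcases eq_or_ne v 0 with rfl | hv
  · rw [gaussianPDFReal_zero_var]
    exact tendsto_const_nhds
  have hv_pos : (0 : ℝ) < 2 * v := by positivity
  have hexponent : Filter.Tendsto (fun x : ℝ => (x - m) ^ 2 / (2 * v)) Filter.atTop Filter.atTop :=
    ((Filter.tendsto_pow_atTop two_ne_zero).comp
      (Filter.tendsto_atTop_add_const_right _ (-m) Filter.tendsto_id)).atTop_div_const hv_pos
  simpa [Function.comp_def, gaussianPDFReal_def, neg_div] using
    (Real.tendsto_exp_neg_atTop_nhds_zero.comp hexponent).const_mul (Real.sqrt (2 * Real.pi * v))⁻¹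

/-- Mills' inequality. On `Ioi a` the density is at most `(x - m) / (a - m)` times itself, and
`(x - m) * gaussianPDFReal m v x` has the primitive `-v * gaussianPDFReal m v x`. -/
lemma gaussianReal_Ioi_le {m a : ℝ} (ha : m < a) (v : NNReal) :
    gaussianReal m v (Set.Ioi a) ≤ ENNReal.ofReal (v * gaussianPDFReal m v a / (a - m)) := by
  rcases eq_or_ne v 0 with rfl | hv
  · simp [gaussianReal_zero_var, ha.le]
  have ham : 0 < a - m := sub_pos.2 ha
  have hderiv : ∀ x ∈ Set.Ici a, HasDerivAt (fun y => -v / (a - m) * gaussianPDFReal m v y)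
      ((x - m) / (a - m) * gaussianPDFReal m v x) x := fun x _ => by
    convert! (hasDerivAt_gaussianPDFReal m v x).const_mul (-(v : ℝ) / (a - m)) using 1
    field_simp
  have hnonneg : ∀ x ∈ Set.Ioi a, 0 ≤ (x - m) / (a - m) * gaussianPDFReal m v x := fun x hx =>
    mul_nonneg (div_nonneg (sub_nonneg.2 (ha.trans hx).le) ham.le) (gaussianPDFReal_nonneg m v x)
  have hlim : Filter.Tendsto (fun y => -v / (a - m) * gaussianPDFReal m v y) Filter.atTop
      (nhds 0) := by
    simpa only [mul_zero] using (tendsto_gaussianPDFReal_atTop m v).const_mul (-(v : ℝ) / (a - m))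
  have hint := integrableOn_Ioi_deriv_of_nonneg' hderiv hnonneg hlim
  rw [gaussianReal_apply_eq_integral _ hv]
  refine ENNReal.ofReal_le_ofReal ?_
  calc ∫ x in Set.Ioi a, gaussianPDFReal m v x
      ≤ ∫ x in Set.Ioi a, (x - m) / (a - m) * gaussianPDFReal m v x :=
        setIntegral_mono_on (integrable_gaussianPDFReal m v).integrableOn hint measurableSet_Ioi
          fun x hx => le_mul_of_one_le_left (gaussianPDFReal_nonneg m v x)
            ((one_le_div ham).2 (sub_le_sub_right (Set.mem_Ioi.1 hx).le m))
    _ = v * gaussianPDFReal m v a / (a - m) := by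
        rw [integral_Ioi_of_hasDerivAt_of_tendsto' hderiv hint hlim]
        ring

lemma gaussianReal_Iio_neg (v : NNReal) (t : ℝ) :
    gaussianReal 0 v (Set.Iio (-t)) = gaussianReal 0 v (Set.Ioi t) := by
  have hsymm : (gaussianReal 0 v).map (fun x => -x) = gaussianReal 0 v := by
    rw [gaussianReal_map_neg, neg_zero]
  conv_lhs => rw [← hsymm, Measure.map_apply measurable_neg measurableSet_Iio]
  simp

lemma gaussianReal_lt_abs_le {t : ℝ} (ht : 0 < t) :
    gaussianReal 0 1 {x | t < |x|} ≤
      ENNReal.ofReal (Real.sqrt (2 / Real.pi) * Real.exp (-t ^ 2 / 2) / t) := by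
  have hunion : {x : ℝ | t < |x|} = Set.Iio (-t) ∪ Set.Ioi t := by
    ext x
    simp [lt_abs, lt_neg, or_comm]
  have hsqrt : Real.sqrt (2 / Real.pi) = 2 * (Real.sqrt (2 * Real.pi))⁻¹ := by
    rw [Real.sqrt_eq_iff_mul_self_eq (by positivity) (by positivity), mul_mul_mul_comm, ← mul_inv,
      Real.mul_self_sqrt (by positivity)]
    field_simp
  calc gaussianReal 0 1 {x | t < |x|}
      ≤ gaussianReal 0 1 (Set.Ioi t) + gaussianReal 0 1 (Set.Ioi t) := by
        rw [hunion]
        exact (measure_union_le _ _).trans_eq (by rw [gaussianReal_Iio_neg])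
    _ ≤ ENNReal.ofReal (gaussianPDFReal 0 1 t / t) +
          ENNReal.ofReal (gaussianPDFReal 0 1 t / t) := by
        simpa using add_le_add (gaussianReal_Ioi_le ht 1) (gaussianReal_Ioi_le ht 1)
    _ = ENNReal.ofReal (Real.sqrt (2 / Real.pi) * Real.exp (-t ^ 2 / 2) / t) := by
        have hpdf := div_nonneg (gaussianPDFReal_nonneg 0 1 t) ht.le
        rw [← ENNReal.ofReal_add hpdf hpdf, hsqrt, gaussianPDFReal]
        congr 1
        simp only [NNReal.coe_one, mul_one, sub_zero]
        ring

lemma gaussianReal_sq_mul_lt_sq_le {s : ℝ} (hs : 0 < s) (v : NNReal) :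
    gaussianReal 0 v {x | s ^ 2 * v < x ^ 2} ≤
      ENNReal.ofReal (Real.sqrt (2 / Real.pi) * Real.exp (-s ^ 2 / 2) / s) := by
  have hscale : (gaussianReal 0 1).map (Real.sqrt v * ·) = gaussianReal 0 v := by
    rw [gaussianReal_map_const_mul, mul_zero, mul_one]
    congr 1
    exact NNReal.eq (Real.sq_sqrt v.coe_nonneg)
  rw [← hscale, Measure.map_apply (by fun_prop) (measurableSet_lt measurable_const (by fun_prop))]
  refine (measure_mono fun x (hx : s ^ 2 * v < (Real.sqrt v * x) ^ 2) => ?_).trans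
    (gaussianReal_lt_abs_le hs)
  rw [mul_pow, Real.sq_sqrt v.coe_nonneg, mul_comm] at hx
  exact (le_abs_self s).trans_lt <| sq_lt_sq.1 (lt_of_mul_lt_mul_left hx v.coe_nonneg)

lemma map_dotProduct_pi_gaussianReal (c : ι → ℝ) :
    (Measure.pi fun _ : ι => gaussianReal 0 1).map (c ⬝ᵥ ·) =
      gaussianReal 0 (c ⬝ᵥ c).toNNReal := by
  have hcomp : (c ⬝ᵥ ·) = innerSL ℝ (WithLp.toLp 2 c) ∘ WithLp.toLp 2 := by
    ext x
    simp [PiLp.inner_apply, dotProduct, mul_comm]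
  have hnorm : ‖innerSL ℝ (WithLp.toLp 2 c)‖ ^ 2 = c ⬝ᵥ c := by
    rw [innerSL_apply_norm, EuclideanSpace.real_norm_sq_eq]
    simp only [dotProduct, sq]
  rw [hcomp, ← Measure.map_map (by fun_prop) (by fun_prop), map_pi_eq_stdGaussian,
    IsGaussian.map_eq_gaussianReal, integral_strongDual_stdGaussian, variance_dual_stdGaussian,
    hnorm]

lemma measure_sq_mul_lt_sq_dotProduct_le {μ : Measure Ω} {ε : Ω → ι → ℝ}
    (hε : HasLaw ε (Measure.pi fun _ => gaussianReal 0 1) μ) (c : ι → ℝ) {s : ℝ} (hs : 0 < s) :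
    μ {ω | s ^ 2 * (c ⬝ᵥ c) < (c ⬝ᵥ ε ω) ^ 2} ≤
      ENNReal.ofReal (Real.sqrt (2 / Real.pi) * Real.exp (-s ^ 2 / 2) / s) := by
  have hlaw : HasLaw (fun ω => c ⬝ᵥ ε ω) (gaussianReal 0 (c ⬝ᵥ c).toNNReal) μ :=
    HasLaw.fun_comp ⟨by fun_prop, map_dotProduct_pi_gaussianReal c⟩ hε
  have hvar : ((c ⬝ᵥ c).toNNReal : ℝ) = c ⬝ᵥ c :=
    Real.coe_toNNReal _ (Finset.sum_nonneg fun i _ => mul_self_nonneg (c i))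
  rw [hlaw.measure_eq (p := fun x => s ^ 2 * (c ⬝ᵥ c) < x ^ 2)
    (measurableSet_lt measurable_const (by fun_prop))]
  simpa only [hvar] using gaussianReal_sq_mul_lt_sq_le hs (c ⬝ᵥ c).toNNReal

lemma ofReal_one_sub_le_measure_forall_sq_dotProduct_le {μ : Measure Ω} {ε : Ω → ι → ℝ}
    (hε : HasLaw ε (Measure.pi fun _ => gaussianReal 0 1) μ) (c : κ → ι → ℝ) {s : ℝ}
    (hs : 0 < s) :
    ENNReal.ofReal
        (1 - Fintype.card κ * (Real.sqrt (2 / Real.pi) * Real.exp (-s ^ 2 / 2) / s)) ≤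
      μ {ω | ∀ k, (c k ⬝ᵥ ε ω) ^ 2 ≤ s ^ 2 * (c k ⬝ᵥ c k)} := by
  have : IsProbabilityMeasure μ := hε.isProbabilityMeasure
  set b := Real.sqrt (2 / Real.pi) * Real.exp (-s ^ 2 / 2) / s
  set good := {ω | ∀ k, (c k ⬝ᵥ ε ω) ^ 2 ≤ s ^ 2 * (c k ⬝ᵥ c k)}
  have hbad : μ goodᶜ ≤ ENNReal.ofReal (Fintype.card κ * b) := by
    have hunion : goodᶜ = ⋃ k, {ω | s ^ 2 * (c k ⬝ᵥ c k) < (c k ⬝ᵥ ε ω) ^ 2} := by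
      ext ω
      simp [good]
    calc μ goodᶜ ≤ ∑ k, μ {ω | s ^ 2 * (c k ⬝ᵥ c k) < (c k ⬝ᵥ ε ω) ^ 2} :=
          hunion ▸ measure_iUnion_fintype_le μ _
      _ ≤ ∑ _k : κ, ENNReal.ofReal b :=
          Finset.sum_le_sum fun k _ => measure_sq_mul_lt_sq_dotProduct_le hε (c k) hs
      _ = ENNReal.ofReal (Fintype.card κ * b) := by
          rw [Finset.sum_const, Finset.card_univ, ← ENNReal.ofReal_nsmul, nsmul_eq_mul]
  rw [ENNReal.ofReal_sub _ (by positivity), ENNReal.ofReal_one, tsub_le_iff_right]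
  calc (1 : ENNReal) = μ (good ∪ goodᶜ) := by rw [Set.union_compl_self, measure_univ]
    _ ≤ μ good + μ goodᶜ := measure_union_le _ _
    _ ≤ μ good + ENNReal.ofReal (Fintype.card κ * b) := by gcongr

end GaussianTails

section Dictionary

variable {n m p r : ℕ}

lemma ip_eq_dotProduct (u v : Fin n → ℝ) : ip u v = u ⬝ᵥ v := rfl

lemma sqnorm_eq_dotProduct (v : Fin n → ℝ) : sqnorm v = v ⬝ᵥ v := by
  simp only [sqnorm, dotProduct, sq]

lemma two_mul_mul_ip_le {c : ℝ} (hc : 0 < c) (σ : ℝ) (w x : Fin p → ℝ) :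
    2 * σ * ip w x ≤ 2 * σ ^ 2 / c * sqnorm w + c / 2 * sqnorm x := by
  rw [ip, sqnorm, sqnorm, Finset.mul_sum, Finset.mul_sum, Finset.mul_sum,
    ← Finset.sum_add_distrib]
  refine Finset.sum_le_sum fun j _ => sub_nonneg.1 ?_
  have hsquare : 2 * σ ^ 2 / c * w j ^ 2 + c / 2 * x j ^ 2 - 2 * σ * (w j * x j) =
      (2 * σ * w j - c * x j) ^ 2 / (2 * c) := by
    field_simp
    ring
  rw [hsquare]
  positivity

lemma ip_transpose_mulVec_mulVec (B : Matrix (Fin n) (Fin m) ℝ) (Φ : Matrix (Fin m) (Fin p) ℝ)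
    (e : Fin n → ℝ) (x : Fin p → ℝ) : ip (Bᵀ *ᵥ e) (Φ *ᵥ x) = ip ((B * Φ)ᵀ *ᵥ e) x := by
  rw [ip_eq_dotProduct, ip_eq_dotProduct, dotProduct_mulVec, ← mulVec_transpose, mulVec_mulVec,
    transpose_mul]

lemma transpose_restr_mulVec_apply (Ψ : Matrix (Fin n) (Fin p) ℝ) (M : Finset (Fin p))
    (e : Fin n → ℝ) (j : Fin p) :
    ((restr Ψ M)ᵀ *ᵥ e) j = if j ∈ M then ip (colv Ψ j) e else 0 := by
  split_ifs with hj <;> simp [mulVec, dotProduct, restr, ip, colv, hj]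

lemma ip_transpose_restr_mulVec (Ψ : Matrix (Fin n) (Fin p) ℝ) {M : Finset (Fin p)}
    (e : Fin n → ℝ) {x : Fin p → ℝ} (hx : Function.support x ⊆ M) :
    ip ((restr Ψ M)ᵀ *ᵥ e) x = ip (Ψᵀ *ᵥ e) x := by
  refine Finset.sum_congr rfl fun j _ => ?_
  by_cases hj : j ∈ M
  · rw [transpose_restr_mulVec_apply, if_pos hj]
    rfl
  · rw [Function.notMem_support.1 (mt (@hx j) hj), mul_zero, mul_zero]

lemma sqnorm_transpose_restr_mulVec (Ψ : Matrix (Fin n) (Fin p) ℝ) (M : Finset (Fin p))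
    (e : Fin n → ℝ) : sqnorm ((restr Ψ M)ᵀ *ᵥ e) = ∑ j ∈ M, ip (colv Ψ j) e ^ 2 := by
  simp [sqnorm, transpose_restr_mulVec_apply, ite_pow]

lemma frob2_restr (Ψ : Matrix (Fin n) (Fin p) ℝ) (M : Finset (Fin p)) :
    frob2 (restr Ψ M) = ∑ j ∈ M, sqnorm (colv Ψ j) := by
  have hcol : ∀ j, sqnorm (colv (restr Ψ M) j) = if j ∈ M then sqnorm (colv Ψ j) else 0 :=
    fun j => by split_ifs with hj <;> simp [sqnorm, colv, restr, hj]
  simp only [frob2, hcol, Finset.sum_ite_mem, Finset.univ_inter]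

lemma sqnorm_transpose_restr_union_mulVec_le (Ψ : Matrix (Fin n) (Fin p) ℝ)
    (M N : Finset (Fin p)) (e : Fin n → ℝ) :
    sqnorm ((restr Ψ (M ∪ N))ᵀ *ᵥ e) ≤
      sqnorm ((restr Ψ M)ᵀ *ᵥ e) + sqnorm ((restr Ψ N)ᵀ *ᵥ e) := by
  simp only [sqnorm_transpose_restr_mulVec]
  rw [← Finset.sum_union_inter]
  exact le_add_of_nonneg_right (Finset.sum_nonneg fun j _ => sq_nonneg _)

lemma sqnorm_transpose_restr_mulVec_le {Ψ : Matrix (Fin n) (Fin p) ℝ} {e : Fin n → ℝ} {K : ℝ}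
    (he : ∀ j, ip (colv Ψ j) e ^ 2 ≤ K * sqnorm (colv Ψ j)) (M : Finset (Fin p)) :
    sqnorm ((restr Ψ M)ᵀ *ᵥ e) ≤ K * frob2 (restr Ψ M) := by
  rw [sqnorm_transpose_restr_mulVec, frob2_restr, Finset.mul_sum]
  exact Finset.sum_le_sum fun j _ => he j

lemma exists_mulVec_eq_of_mem_span_colv {Φ : Matrix (Fin m) (Fin p) ℝ} {M : Finset (Fin p)}
    {v : Fin m → ℝ} (hv : v ∈ Submodule.span ℝ (colv Φ '' (M : Set (Fin p)))) :
    ∃ x : Fin p → ℝ, Function.support x ⊆ M ∧ Φ *ᵥ x = v := by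
  obtain ⟨c, rfl⟩ := (Submodule.mem_span_image_finset_iff_exists_fun' ℝ).1 hv
  refine ⟨(M : Set (Fin p)).indicator c, Set.support_indicator_subset, ?_⟩
  ext i
  simp [mulVec, dotProduct, colv, Set.indicator_apply, mul_comm]

lemma IsProjOnto.mulVec_mem_span {Φ : Matrix (Fin m) (Fin p) ℝ} {M : Finset (Fin p)}
    {H : Matrix (Fin m) (Fin m) ℝ} (hH : IsProjOnto Φ M H) (z : Fin m → ℝ) :
    H *ᵥ z ∈ Submodule.span ℝ (colv Φ '' (M : Set (Fin p))) :=
  hH.2.2 ▸ LinearMap.mem_range_self H.mulVecLin z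

section SparseEigenvalue

variable {Φ : Matrix (Fin m) (Fin p) ℝ} {ν2 : ℝ}

lemma ip_sub_half_sqnorm_le_of_mem_span (hν2 : 0 < ν2)
    (hν2min : ∀ x : Fin p → ℝ, x ≠ 0 → sparse r x → ν2 * sqnorm x ≤ sqnorm (Φ *ᵥ x))
    (B : Matrix (Fin n) (Fin m) ℝ) (σ : ℝ) (e : Fin n → ℝ) {S : Finset (Fin p)} (hS : #S ≤ r)
    {v : Fin m → ℝ} (hv : v ∈ Submodule.span ℝ (colv Φ '' (S : Set (Fin p)))) :
    2 * σ * ip (Bᵀ *ᵥ e) v - 1 / 2 * sqnorm v ≤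
      2 * σ ^ 2 / ν2 * sqnorm ((restr (B * Φ) S)ᵀ *ᵥ e) := by
  obtain ⟨x, hxS, rfl⟩ := exists_mulVec_eq_of_mem_span_colv hv
  have hsparse : sparse r x :=
    (Set.ncard_le_ncard hxS S.finite_toSet).trans ((Set.ncard_coe_finset S).trans_le hS)
  have hlower : ν2 * sqnorm x ≤ sqnorm (Φ *ᵥ x) := by
    rcases eq_or_ne x 0 with rfl | hx
    · simp [sqnorm]
    · exact hν2min x hx hsparse
  have hyoung := two_mul_mul_ip_le hν2 σ ((restr (B * Φ) S)ᵀ *ᵥ e) x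
  rw [ip_transpose_mulVec_mulVec, ← ip_transpose_restr_mulVec (B * Φ) e hxS]
  linarith

lemma ip_sub_half_sqnorm_sub_le_of_mem_models (hν2 : 0 < ν2)
    (hν2min : ∀ x : Fin p → ℝ, x ≠ 0 → sparse r x → ν2 * sqnorm x ≤ sqnorm (Φ *ᵥ x))
    (B : Matrix (Fin n) (Fin m) ℝ) (σ : ℝ) (e : Fin n → ℝ) {M N : Finset (Fin p)}
    (hM : M ∈ models p r) (hN : N ∈ models p r) {u v : Fin m → ℝ}
    (hu : u ∈ Submodule.span ℝ (colv Φ '' (M : Set (Fin p))))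
    (hv : v ∈ Submodule.span ℝ (colv Φ '' (N : Set (Fin p)))) :
    2 * σ * ip (Bᵀ *ᵥ e) (u - v) - 1 / 2 * sqnorm (u - v) ≤
      2 * σ ^ 2 / ν2 *
        (sqnorm ((restr (B * Φ) M)ᵀ *ᵥ e) + sqnorm ((restr (B * Φ) N)ᵀ *ᵥ e)) := by
  have hcard : #(M ∪ N) ≤ r := by
    have := Finset.card_union_le M N
    simp only [models, Finset.mem_filter_univ] at hM hN
    omega
  have hspan : u - v ∈ Submodule.span ℝ (colv Φ '' ((M ∪ N : Finset (Fin p)) : Set (Fin p))) := by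
    rw [Finset.coe_union, Set.image_union, Submodule.span_union]
    exact sub_mem (Submodule.mem_sup_left hu) (Submodule.mem_sup_right hv)
  refine (ip_sub_half_sqnorm_le_of_mem_span hν2 hν2min B σ e hcard hspan).trans ?_
  gcongr
  exact sqnorm_transpose_restr_union_mulVec_le _ M N e

end SparseEigenvalue

lemma ip_sum_smul_sub_le {ι : Type*} {C : Finset ι} {θ : ι → ℝ} (hθ : ∀ i ∈ C, 0 ≤ θ i)
    (hθ1 : ∑ i ∈ C, θ i = 1) {ξ v : Fin m → ℝ} {g : ι → Fin m → ℝ} {a b u : ℝ} {U : ι → ℝ}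
    (h : ∀ i ∈ C, a * ip ξ (g i - v) - b * sqnorm (g i - v) ≤ U i + u) :
    a * ip ξ (∑ i ∈ C, θ i • g i - v) - b * ∑ i ∈ C, θ i * sqnorm (g i - v) ≤
      ∑ i ∈ C, θ i * U i + u := by
  have hsub : ∑ i ∈ C, θ i • g i - v = ∑ i ∈ C, θ i • (g i - v) := by
    simp only [smul_sub, Finset.sum_sub_distrib, ← Finset.sum_smul, hθ1, one_smul]
  have hip : ip ξ (∑ i ∈ C, θ i • g i - v) = ∑ i ∈ C, θ i * ip ξ (g i - v) := by
    simp only [hsub, ip_eq_dotProduct, dotProduct_sum, dotProduct_smul, smul_eq_mul]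
  calc a * ip ξ (∑ i ∈ C, θ i • g i - v) - b * ∑ i ∈ C, θ i * sqnorm (g i - v)
      = ∑ i ∈ C, θ i * (a * ip ξ (g i - v) - b * sqnorm (g i - v)) := by
        rw [hip, Finset.mul_sum, Finset.mul_sum, ← Finset.sum_sub_distrib]
        exact Finset.sum_congr rfl fun i _ => by ring
    _ ≤ ∑ i ∈ C, θ i * (U i + u) :=
        Finset.sum_le_sum fun i hi => mul_le_mul_of_nonneg_left (h i hi) (hθ i hi)
    _ = ∑ i ∈ C, θ i * U i + u := by
        simp only [mul_add, Finset.sum_add_distrib, ← Finset.sum_mul, hθ1, one_mul]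

end Dictionary

section Aggregation

variable {n m p r : ℕ} {Ω : Type*} [MeasurableSpace Ω] {μ : Measure Ω} {ε : Ω → Fin n → ℝ}
  {δ ν2 : ℝ}

/-- The penalty `4σ²(δ+1)ν⁻²‖Ψ_M‖_F² ln p` of a model `M`, for an arbitrary matrix `Ψ`, with `ν2`
standing for `ν²`. It unfolds to `Ufun A Φ` when `Ψ = Psi A Φ`. -/
def penalty (Ψ : Matrix (Fin n) (Fin p) ℝ) (σ δ ν2 : ℝ) (M : Finset (Fin p)) : ℝ :=
  4 * σ ^ 2 * (δ + 1) / ν2 * frob2 (restr Ψ M) * Real.log p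

lemma one_le_two_mul_add_one_mul_log (hp : 2 ≤ p) (hδ : 0 ≤ δ) : 1 ≤ 2 * (δ + 1) * Real.log p := by
  have hlog : Real.log 2 ≤ Real.log p := Real.log_le_log two_pos (by exact_mod_cast hp)
  nlinarith [Real.log_two_gt_d9]

lemma mul_exp_neg_add_one_mul_log {x : ℝ} (hx : 0 < x) (δ : ℝ) :
    x * Real.exp (-((δ + 1) * Real.log x)) = x ^ (-δ) := by
  calc x * Real.exp (-((δ + 1) * Real.log x))
      = Real.exp (Real.log x) * Real.exp (-((δ + 1) * Real.log x)) := by rw [Real.exp_log hx]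
    _ = Real.exp (Real.log x * -δ) := by rw [← Real.exp_add]; ring_nf
    _ = x ^ (-δ) := (Real.rpow_def_of_pos hx _).symm

lemma ofReal_one_sub_le_measure_forall_sq_ip_colv_le (hp : 2 ≤ p) (hδ : 0 ≤ δ)
    (hε : HasLaw ε (Measure.pi fun _ => gaussianReal 0 1) μ) (Ψ : Matrix (Fin n) (Fin p) ℝ) :
    ENNReal.ofReal (1 - Real.sqrt (2 / Real.pi) * (p : ℝ) ^ (-δ)) ≤
      μ {ω | ∀ j, ip (colv Ψ j) (ε ω) ^ 2 ≤ 2 * (δ + 1) * Real.log p * sqnorm (colv Ψ j)} := by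
  have hK := one_le_two_mul_add_one_mul_log hp hδ
  set s := Real.sqrt (2 * (δ + 1) * Real.log p)
  have hs : 1 ≤ s := Real.one_le_sqrt.2 hK
  have hs_sq : s ^ 2 = 2 * (δ + 1) * Real.log p := Real.sq_sqrt (zero_le_one.trans hK)
  have hbound : p * (Real.sqrt (2 / Real.pi) * Real.exp (-s ^ 2 / 2) / s) ≤
      Real.sqrt (2 / Real.pi) * (p : ℝ) ^ (-δ) :=
    calc p * (Real.sqrt (2 / Real.pi) * Real.exp (-s ^ 2 / 2) / s)
        ≤ p * (Real.sqrt (2 / Real.pi) * Real.exp (-s ^ 2 / 2)) := by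
          gcongr
          exact div_le_self (by positivity) hs
      _ = Real.sqrt (2 / Real.pi) * (p * Real.exp (-((δ + 1) * Real.log p))) := by
          rw [hs_sq]
          ring_nf
      _ = Real.sqrt (2 / Real.pi) * (p : ℝ) ^ (-δ) := by
          rw [mul_exp_neg_add_one_mul_log (by positivity)]
  simp only [sqnorm_eq_dotProduct, ip_eq_dotProduct, ← hs_sq]
  refine le_trans (ENNReal.ofReal_le_ofReal ?_)
    (ofReal_one_sub_le_measure_forall_sq_dotProduct_le hε (colv Ψ) (zero_lt_one.trans_le hs))
  rw [Fintype.card_fin]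
  exact sub_le_sub_left hbound 1

lemma sqnorm_transpose_restr_mulVec_le_penalty {Ψ : Matrix (Fin n) (Fin p) ℝ} {e : Fin n → ℝ}
    (hν2 : 0 < ν2) (σ : ℝ)
    (he : ∀ j, ip (colv Ψ j) e ^ 2 ≤ 2 * (δ + 1) * Real.log p * sqnorm (colv Ψ j))
    (M : Finset (Fin p)) :
    2 * σ ^ 2 / ν2 * sqnorm ((restr Ψ M)ᵀ *ᵥ e) ≤ penalty Ψ σ δ ν2 M :=
  calc 2 * σ ^ 2 / ν2 * sqnorm ((restr Ψ M)ᵀ *ᵥ e)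
      ≤ 2 * σ ^ 2 / ν2 * (2 * (δ + 1) * Real.log p * frob2 (restr Ψ M)) := by
        gcongr
        exact sqnorm_transpose_restr_mulVec_le he M
    _ = penalty Ψ σ δ ν2 M := by
        rw [penalty]
        ring

/-- The noise enters only through the scalars `⟨(B * Φ)_j, ε⟩`, so one event serves all `M₀` and all
estimators `g M` in the span of the columns of `M`, even data-dependent ones. Lemma 4 is the case
`B = A(AᵀA)⁻¹`, `g M = H_M z`. -/
theorem lemma4_high_probability_general (hp : 2 ≤ p) (B : Matrix (Fin n) (Fin m) ℝ)
    (Φ : Matrix (Fin m) (Fin p) ℝ) (σ : ℝ) (hδ : 0 ≤ δ) (hν2 : 0 < ν2)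
    (hν2min : ∀ x : Fin p → ℝ, x ≠ 0 → sparse r x → ν2 * sqnorm x ≤ sqnorm (Φ *ᵥ x))
    (hε : HasLaw ε (Measure.pi fun _ => gaussianReal 0 1) μ) :
    ENNReal.ofReal (1 - Real.sqrt (2 / Real.pi) * (p : ℝ) ^ (-δ)) ≤
      μ {ω | ∀ M₀ ∈ models p r, ∀ g : Finset (Fin p) → Fin m → ℝ,
        (∀ M ∈ models p r, g M ∈ Submodule.span ℝ (colv Φ '' (M : Set (Fin p)))) →
        ∀ θ : Finset (Fin p) → ℝ,
        (∀ M ∈ models p r, 0 ≤ θ M) → (∑ M ∈ models p r, θ M = 1) →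
        2 * σ * ip (Bᵀ *ᵥ ε ω) (∑ M ∈ models p r, θ M • g M - g M₀) +
          σ ^ 2 / ν2 * sqnorm ((restr (B * Φ) M₀)ᵀ *ᵥ ε ω) -
          3 / 2 * penalty (B * Φ) σ δ ν2 M₀ -
          (∑ M ∈ models p r, θ M * penalty (B * Φ) σ δ ν2 M) -
          1 / 2 * ∑ M ∈ models p r, θ M * sqnorm (g M - g M₀) ≤ 0} := by
  refine (ofReal_one_sub_le_measure_forall_sq_ip_colv_le hp hδ hε (B * Φ)).trans
    (measure_mono fun ω hω M₀ hM₀ g hg θ hθ hθ1 => ?_)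
  have hnoise := sqnorm_transpose_restr_mulVec_le_penalty hν2 σ hω
  have hpair : ∀ M ∈ models p r,
      2 * σ * ip (Bᵀ *ᵥ ε ω) (g M - g M₀) - 1 / 2 * sqnorm (g M - g M₀) ≤
        penalty (B * Φ) σ δ ν2 M + penalty (B * Φ) σ δ ν2 M₀ := fun M hM =>
    calc _ ≤ 2 * σ ^ 2 / ν2 * (sqnorm ((restr (B * Φ) M)ᵀ *ᵥ ε ω) +
            sqnorm ((restr (B * Φ) M₀)ᵀ *ᵥ ε ω)) :=
          ip_sub_half_sqnorm_sub_le_of_mem_models hν2 hν2min B σ (ε ω) hM hM₀ (hg M hM) (hg M₀ hM₀)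
      _ ≤ _ := by
          rw [mul_add]
          exact add_le_add (hnoise M) (hnoise M₀)
  have hmix := ip_sum_smul_sub_le hθ hθ1 hpair
  have hnoise₀ : σ ^ 2 / ν2 * sqnorm ((restr (B * Φ) M₀)ᵀ *ᵥ ε ω) ≤
      1 / 2 * penalty (B * Φ) σ δ ν2 M₀ :=
    calc _ = 1 / 2 * (2 * σ ^ 2 / ν2 * sqnorm ((restr (B * Φ) M₀)ᵀ *ᵥ ε ω)) := by ring
      _ ≤ _ := by gcongr; exact hnoise M₀
  linarith

lemma xiv_eq_transpose_mulVec (A : Matrix (Fin n) (Fin m) ℝ) (e : Fin n → ℝ) :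
    xiv A e = (A * (Aᵀ * A)⁻¹)ᵀ *ᵥ e := by
  rw [xiv, transpose_mul, transpose_nonsing_inv, transpose_mul, transpose_transpose]

end Aggregation

/-- Lemma 4, first part: with probability at least `1 - √(2/π) p^{-δ}`, `Δ₀(θ) ≤ 0`
simultaneously for all `θ` in the simplex `Θ_𝓜`. -/
theorem lemma4_high_probability
    {n m p r : ℕ} (hp : 2 ≤ p) (hmn : m ≤ n)
    (A : Matrix (Fin n) (Fin m) ℝ) (hrank : A.rank = m)
    (Φ : Matrix (Fin m) (Fin p) ℝ) (hΦnorm : ∀ j, sqnorm (colv Φ j) = 1)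
    (σ : ℝ) (hσ : 0 < σ) (δ : ℝ) (hδ : 0 < δ)
    (ν2 : ℝ) (hν2 : 0 < ν2)
    (hν2min : ∀ x : Fin p → ℝ, x ≠ 0 → sparse r x → ν2 * sqnorm x ≤ sqnorm (Φ.mulVec x))
    (H : Finset (Fin p) → Matrix (Fin m) (Fin m) ℝ)
    (hH : ∀ M : Finset (Fin p), IsProjOnto Φ M (H M))
    {Ω : Type*} [MeasurableSpace Ω] (μ : Measure Ω) [IsProbabilityMeasure μ]
    (ε : Ω → Fin n → ℝ) (hεmeas : Measurable ε)
    (hεdist : Measure.map ε μ = Measure.pi fun _ : Fin n => gaussianReal 0 1)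
    (f : Fin m → ℝ)
    (M₀ : Finset (Fin p)) (hM₀ : M₀ ∈ models p r) :
    ENNReal.ofReal (1 - Real.sqrt (2 / Real.pi) * (p : ℝ) ^ (-δ)) ≤
      μ {ω | ∀ θ : Finset (Fin p) → ℝ,
        (∀ M ∈ models p r, 0 ≤ θ M) → (∑ M ∈ models p r, θ M = 1) →
        2 * σ * ip (xiv A (ε ω))
            (aggEst (models p r) H (zv A f σ (ε ω)) θ - (H M₀).mulVec (zv A f σ (ε ω))) +
          σ ^ 2 / ν2 * sqnorm ((restr (Psi A Φ) M₀)ᵀ.mulVec (ε ω)) -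
          3 / 2 * Ufun A Φ σ δ ν2 M₀ -
          (∑ M ∈ models p r, θ M * Ufun A Φ σ δ ν2 M) -
          1 / 2 * ∑ M ∈ models p r,
            θ M * sqnorm ((H M).mulVec (zv A f σ (ε ω)) - (H M₀).mulVec (zv A f σ (ε ω)))
          ≤ 0} := by
  refine (lemma4_high_probability_general hp (A * (Aᵀ * A)⁻¹) Φ σ hδ.le hν2 hν2min
    ⟨hεmeas.aemeasurable, hεdist⟩).trans (measure_mono fun ω hω θ hθ hθ1 => ?_)
  rw [xiv_eq_transpose_mulVec]
  exact hω M₀ hM₀ _ (fun M _ => (hH M).mulVec_mem_span (zv A f σ (ε ω))) θ hθ hθ1
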